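/- Let L : ℝ^{2d+2} → ℝ^{(d+1)×(d+1)} be a smooth mobility function all of whose first partial derivatives are bounded in norm by C_L. Let ρ, η, ρ̂, η̂, μ̂_ρ, μ̂_η be smooth ℤ^d-periodic functions on ℝ^d, write L = L(ρ,∇ρ,η,∇η), L̂ = L(ρ̂,∇ρ̂,η̂,∇η̂), and define r₁ := div((L̂₁₁ − L₁₁)∇μ̂_ρ + (L̂₁₂ − L₁₂)μ̂_η) and r₃ := (L₂₁ − L̂₂₁)·∇μ̂_ρ + (L₂₂ − L̂₂₂)μ̂_η. Then there exists a constant C > 0 depending only on C_L and d such that ‖r₁‖₋₁ + ‖r₃‖₀ ≤ C·( ‖∇μ̂_ρ‖_{L^∞(Ω)} + ‖μ̂_η‖_{L^∞(Ω)} )·( ‖ρ − ρ̂‖₁ + ‖η − η̂‖₁ ). -/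

import Mathlib

noncomputable section
open MeasureTheory

/-- The periodicity cell `Ω = [0,1]^d`. -/
def cell (d : ℕ) : Set (Fin d → ℝ) := Set.Icc 0 1

/-- `ℤ^d`-periodicity of a function on `ℝ^d`. -/
def ZPeriodic {d : ℕ} (f : (Fin d → ℝ) → ℝ) : Prop :=
  ∀ (x : Fin d → ℝ) (k : Fin d → ℤ), f (x + fun i => (k i : ℝ)) = f x

/-- The gradient of a scalar field on `ℝ^d`. -/
def grad {d : ℕ} (f : (Fin d → ℝ) → ℝ) (x : Fin d → ℝ) : Fin d → ℝ :=
  fun i => fderiv ℝ f x (Pi.single i 1)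

/-- The divergence of a vector field on `ℝ^d`. -/
def divg {d : ℕ} (F : (Fin d → ℝ) → Fin d → ℝ) (x : Fin d → ℝ) : ℝ :=
  ∑ i, fderiv ℝ (fun y => F y i) x (Pi.single i 1)

/-- Squared `L²(Ω)` norm. -/
def l2sq {d : ℕ} (f : (Fin d → ℝ) → ℝ) : ℝ := ∫ x in cell d, (f x) ^ 2

/-- Squared `L²(Ω)` norm of a vector field. -/
def l2sqVec {d : ℕ} (F : (Fin d → ℝ) → Fin d → ℝ) : ℝ :=
  ∫ x in cell d, ∑ i, (F x i) ^ 2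

/-- Squared `H¹(Ω)` norm. -/
def h1sq {d : ℕ} (f : (Fin d → ℝ) → ℝ) : ℝ := l2sq f + l2sqVec (grad f)

/-- Negative-order norm `‖r‖₋₁ = sup { ∫_Ω r v dx / ‖v‖₁ }`, the supremum
being over nonzero smooth `ℤ^d`-periodic test functions. -/
def hneg1 {d : ℕ} (r : (Fin d → ℝ) → ℝ) : ℝ :=
  sSup { c | ∃ v : (Fin d → ℝ) → ℝ, ContDiff ℝ (⊤ : ℕ∞) v ∧ ZPeriodic v ∧ v ≠ 0 ∧
    c = (∫ x in cell d, r x * v x) / Real.sqrt (h1sq v) }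

/-- `L^∞(Ω)` norm of a scalar field. -/
def supAbs {d : ℕ} (g : (Fin d → ℝ) → ℝ) : ℝ :=
  sSup { y | ∃ x ∈ cell d, y = |g x| }

/-- `L^∞(Ω)` norm of a vector field. -/
def supNormVec {d : ℕ} (G : (Fin d → ℝ) → Fin d → ℝ) : ℝ :=
  sSup { y | ∃ x ∈ cell d, y = Real.sqrt (∑ i, (G x i) ^ 2) }

/-- The argument tuple `(ρ, ∇ρ, η, ∇η) ∈ ℝ^{2d+2}` of the mobility. -/
abbrev Args (d : ℕ) := ℝ × (Fin d → ℝ) × ℝ × (Fin d → ℝ)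

/-- Mobility arguments `(ρ(x), ∇ρ(x), η(x), ∇η(x))`. -/
def mobArgs {d : ℕ} (ρ η : (Fin d → ℝ) → ℝ) (x : Fin d → ℝ) : Args d :=
  (ρ x, grad ρ x, η x, grad η x)

/-- The residual `r₁ = div((L̂₁₁ − L₁₁)∇μ̂_ρ + (L̂₁₂ − L₁₂)μ̂_η)`. -/
def res1 {d : ℕ} (L : Args d → Matrix (Fin d ⊕ Unit) (Fin d ⊕ Unit) ℝ)
    (ρ η ρh ηh μρh μηh : (Fin d → ℝ) → ℝ) (x : Fin d → ℝ) : ℝ :=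
  divg (fun y i =>
    (∑ j, (L (mobArgs ρh ηh y) (Sum.inl i) (Sum.inl j)
        - L (mobArgs ρ η y) (Sum.inl i) (Sum.inl j)) * grad μρh y j)
    + (L (mobArgs ρh ηh y) (Sum.inl i) (Sum.inr ())
        - L (mobArgs ρ η y) (Sum.inl i) (Sum.inr ())) * μηh y) x

/-- The residual `r₃ = (L₂₁ − L̂₂₁)·∇μ̂_ρ + (L₂₂ − L̂₂₂)μ̂_η`. -/
def res3 {d : ℕ} (L : Args d → Matrix (Fin d ⊕ Unit) (Fin d ⊕ Unit) ℝ)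
    (ρ η ρh ηh μρh μηh : (Fin d → ℝ) → ℝ) (x : Fin d → ℝ) : ℝ :=
  (∑ i, (L (mobArgs ρ η x) (Sum.inr ()) (Sum.inl i)
      - L (mobArgs ρh ηh x) (Sum.inr ()) (Sum.inl i)) * grad μρh x i)
  + (L (mobArgs ρ η x) (Sum.inr ()) (Sum.inr ())
      - L (mobArgs ρh ηh x) (Sum.inr ()) (Sum.inr ())) * μηh x

/-!
Testing `div F` against `v` and integrating by parts over a period gives `‖div F‖₋₁ ≤ ‖F‖₀`, so
both residuals are controlled by `L²` norms of entries of `(L − L̂)(∇μ̂_ρ, μ̂_η)`. As `L` is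
Lipschitz, these entries are dominated on `Ω` by a constant times
`(‖∇μ̂_ρ‖_{L^∞} + ‖μ̂_η‖_{L^∞}) |(ρ, ∇ρ, η, ∇η) − (ρ̂, ∇ρ̂, η̂, ∇η̂)|`, and the `L²` norm
of the last factor is at most `‖ρ − ρ̂‖₁ + ‖η − η̂‖₁`.
-/

section PointwiseEstimates

theorem prod_norm_sq_le_add {E F : Type*} [SeminormedAddCommGroup E] [SeminormedAddCommGroup F]
    (p : E × F) : ‖p‖ ^ 2 ≤ ‖p.1‖ ^ 2 + ‖p.2‖ ^ 2 := by
  rcases max_choice ‖p.1‖ ‖p.2‖ with h | h <;> rw [Prod.norm_def, h]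
  · exact le_add_of_nonneg_right (sq_nonneg _)
  · exact le_add_of_nonneg_left (sq_nonneg _)

theorem pi_norm_sq_le_sum {ι : Type*} [Fintype ι] {E : ι → Type*}
    [∀ i, SeminormedAddCommGroup (E i)] (v : ∀ i, E i) : ‖v‖ ^ 2 ≤ ∑ i, ‖v i‖ ^ 2 := by
  have hsum : 0 ≤ ∑ i, ‖v i‖ ^ 2 := Finset.sum_nonneg fun _ _ => sq_nonneg _
  refine (Real.le_sqrt (norm_nonneg _) hsum).1 ?_
  refine (pi_norm_le_iff_of_nonneg (Real.sqrt_nonneg _)).2 fun i => Real.le_sqrt_of_sq_le ?_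
  exact Finset.single_le_sum (f := fun i => ‖v i‖ ^ 2) (fun _ _ => sq_nonneg _) (Finset.mem_univ i)

theorem abs_dotProduct_le_card_mul {ι : Type*} [Fintype ι] {a z : ι → ℝ} {A Z : ℝ}
    (ha : ∀ i, |a i| ≤ A) (hz : ∀ i, |z i| ≤ Z) : |a ⬝ᵥ z| ≤ Fintype.card ι * (A * Z) := by
  calc |a ⬝ᵥ z| ≤ ∑ i, |a i * z i| := Finset.abs_sum_le_sum_abs _ _
    _ ≤ ∑ _i : ι, A * Z := by
      refine Finset.sum_le_sum fun i _ => ?_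
      rw [abs_mul]
      exact mul_le_mul (ha i) (hz i) (abs_nonneg _) ((abs_nonneg _).trans (ha i))
    _ = Fintype.card ι * (A * Z) := by simp

theorem abs_sum_mul_le_sqrt_mul_sqrt {ι : Type*} (s : Finset ι) (f g : ι → ℝ) :
    |∑ i ∈ s, f i * g i| ≤ √(∑ i ∈ s, f i ^ 2) * √(∑ i ∈ s, g i ^ 2) := by
  rw [← Real.sqrt_mul (Finset.sum_nonneg fun _ _ => sq_nonneg _)]
  exact Real.abs_le_sqrt (Finset.sum_mul_sq_le_sq_mul_sq s f g)

theorem sqrt_add_le_sqrt_add_sqrt {a b : ℝ} (ha : 0 ≤ a) (hb : 0 ≤ b) : √(a + b) ≤ √a + √b := by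
  refine Real.sqrt_le_iff.2 ⟨by positivity, ?_⟩
  rw [add_sq, Real.sq_sqrt ha, Real.sq_sqrt hb]
  have : 0 ≤ 2 * √a * √b := by positivity
  linarith

end PointwiseEstimates

theorem integral_mul_le_sqrt_mul_sqrt_of_nonneg {α : Type*} [MeasurableSpace α] {μ : Measure α}
    {f g : α → ℝ} (hf₀ : 0 ≤ᵐ[μ] f) (hg₀ : 0 ≤ᵐ[μ] g) (hf : MemLp f 2 μ) (hg : MemLp g 2 μ) :
    ∫ x, f x * g x ∂μ ≤ √(∫ x, f x ^ 2 ∂μ) * √(∫ x, g x ^ 2 ∂μ) := by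
  have hölder := integral_mul_le_Lp_mul_Lq_of_nonneg Real.HolderConjugate.two_two hf₀ hg₀
    (by simpa using hf) (by simpa using hg)
  simpa only [Real.rpow_two, ← Real.sqrt_eq_rpow] using hölder

section Gradient

variable {d : ℕ} {f g ρ η ρh ηh : (Fin d → ℝ) → ℝ} {m n : WithTop ℕ∞} {x : Fin d → ℝ}

theorem contDiff_grad (hf : ContDiff ℝ n f) (hmn : m + 1 ≤ n) : ContDiff ℝ m (grad f) :=
  contDiff_pi.2 fun _ => (hf.fderiv_right hmn).clm_apply contDiff_const

theorem continuous_grad (hf : ContDiff ℝ 1 f) : Continuous (grad f) :=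
  (contDiff_grad (m := 0) hf (by simp)).continuous

theorem grad_sub (hf : DifferentiableAt ℝ f x) (hg : DifferentiableAt ℝ g x) :
    grad (fun y => f y - g y) x = grad f x - grad g x := by
  funext i
  simp [grad, fderiv_fun_sub hf hg]

theorem ZPeriodic.grad_add_intCast (hf : ZPeriodic f) (x : Fin d → ℝ) (k : Fin d → ℤ) :
    grad f (x + fun i => (k i : ℝ)) = grad f x := by
  funext i
  have hshift : (fun y => f (y + fun i => (k i : ℝ))) = f := funext fun y => hf y k
  rw [grad, ← fderiv_comp_add_right, hshift, grad]

theorem contDiff_mobArgs (hρ : ContDiff ℝ n ρ) (hη : ContDiff ℝ n η) (hmn : m + 1 ≤ n) :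
    ContDiff ℝ m (mobArgs ρ η) := by
  have hm : m ≤ n := le_self_add.trans hmn
  exact (hρ.of_le hm).prodMk
    ((contDiff_grad hρ hmn).prodMk ((hη.of_le hm).prodMk (contDiff_grad hη hmn)))

theorem continuous_mobArgs (hρ : ContDiff ℝ 1 ρ) (hη : ContDiff ℝ 1 η) :
    Continuous (mobArgs ρ η) :=
  (contDiff_mobArgs (m := 0) hρ hη (by simp)).continuous

theorem ZPeriodic.mobArgs_add_intCast (hρ : ZPeriodic ρ) (hη : ZPeriodic η) (x : Fin d → ℝ)
    (k : Fin d → ℤ) : mobArgs ρ η (x + fun i => (k i : ℝ)) = mobArgs ρ η x := by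
  simp only [mobArgs, hρ x k, hη x k, hρ.grad_add_intCast, hη.grad_add_intCast]

theorem mobArgs_sub (hρ : DifferentiableAt ℝ ρ x) (hη : DifferentiableAt ℝ η x)
    (hρh : DifferentiableAt ℝ ρh x) (hηh : DifferentiableAt ℝ ηh x) :
    mobArgs (fun y => ρ y - ρh y) (fun y => η y - ηh y) x = mobArgs ρ η x - mobArgs ρh ηh x := by
  simp only [mobArgs, grad_sub hρ hρh, grad_sub hη hηh, Prod.mk_sub_mk]

theorem norm_mobArgs_sq_le (ρ η : (Fin d → ℝ) → ℝ) (x : Fin d → ℝ) :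
    ‖mobArgs ρ η x‖ ^ 2 ≤
      (ρ x ^ 2 + ∑ i, grad ρ x i ^ 2) + (η x ^ 2 + ∑ i, grad η x i ^ 2) := by
  have hρη := prod_norm_sq_le_add (mobArgs ρ η x)
  have hη := prod_norm_sq_le_add (mobArgs ρ η x).2
  have hη' := prod_norm_sq_le_add (mobArgs ρ η x).2.2
  have hgradρ := pi_norm_sq_le_sum (grad ρ x)
  have hgradη := pi_norm_sq_le_sum (grad η x)
  simp only [mobArgs, Real.norm_eq_abs, sq_abs] at *
  linarith

end Gradient

section CellNorms

variable {d : ℕ} {f g : (Fin d → ℝ) → ℝ} {F G : (Fin d → ℝ) → Fin d → ℝ} {x : Fin d → ℝ}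

theorem integrableOn_cell (hf : Continuous f) : IntegrableOn f (cell d) := hf.integrableOn_Icc

theorem memLp_two_cell (hf : Continuous f) : MemLp f 2 (volume.restrict (cell d)) :=
  (memLp_two_iff_integrable_sq hf.aestronglyMeasurable).2 (integrableOn_cell (hf.pow 2))

theorem l2sq_const_mul (c : ℝ) (f : (Fin d → ℝ) → ℝ) :
    l2sq (fun x => c * f x) = c ^ 2 * l2sq f := by
  simp only [l2sq, mul_pow, integral_const_mul]

theorem l2sq_le_of_abs_le (hg : Continuous g) (hfg : ∀ x ∈ cell d, |f x| ≤ g x) :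
    l2sq f ≤ l2sq g :=
  integral_mono_of_nonneg (ae_of_all _ fun _ => sq_nonneg _) (integrableOn_cell (hg.pow 2))
    (ae_restrict_of_forall_mem measurableSet_Icc fun x hx =>
      sq_le_sq' (abs_le.1 (hfg x hx)).1 (abs_le.1 (hfg x hx)).2)

theorem l2sqVec_le_of_abs_le (hg : Continuous g) (hFg : ∀ x ∈ cell d, ∀ i, |F x i| ≤ g x) :
    l2sqVec F ≤ d * l2sq g := by
  rw [l2sq, ← integral_const_mul]
  refine integral_mono_of_nonneg (ae_of_all _ fun _ => Finset.sum_nonneg fun _ _ => sq_nonneg _)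
    (integrableOn_cell (continuous_const.mul (hg.pow 2)))
    (ae_restrict_of_forall_mem measurableSet_Icc fun x hx => ?_)
  calc ∑ i, F x i ^ 2 ≤ ∑ _i : Fin d, g x ^ 2 := Finset.sum_le_sum fun i _ =>
        sq_le_sq' (abs_le.1 (hFg x hx i)).1 (abs_le.1 (hFg x hx i)).2
    _ = d * g x ^ 2 := by simp

theorem l2sqVec_grad_le_h1sq (f : (Fin d → ℝ) → ℝ) : l2sqVec (grad f) ≤ h1sq f :=
  le_add_of_nonneg_left (integral_nonneg fun _ => sq_nonneg _)

theorem h1sq_nonneg (f : (Fin d → ℝ) → ℝ) : 0 ≤ h1sq f :=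
  (integral_nonneg fun _ => Finset.sum_nonneg fun _ _ => sq_nonneg _).trans
    (l2sqVec_grad_le_h1sq f)

theorem h1sq_eq_integral (hf : ContDiff ℝ 1 f) :
    h1sq f = ∫ x in cell d, (f x ^ 2 + ∑ i, grad f x i ^ 2) := by
  have hgrad := continuous_grad hf
  exact (integral_add (integrableOn_cell (hf.continuous.pow 2))
    (integrableOn_cell (by fun_prop))).symm

theorem continuous_sq_add_sum_grad_sq (hf : ContDiff ℝ 1 f) :
    Continuous fun x => f x ^ 2 + ∑ i, grad f x i ^ 2 := by
  have hcont := hf.continuous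
  have hgrad := continuous_grad hf
  fun_prop

theorem l2sq_norm_mobArgs_le (hf : ContDiff ℝ 1 f) (hg : ContDiff ℝ 1 g) :
    l2sq (fun x => ‖mobArgs f g x‖) ≤ h1sq f + h1sq g := by
  have hf_int := integrableOn_cell (continuous_sq_add_sum_grad_sq hf)
  have hg_int := integrableOn_cell (continuous_sq_add_sum_grad_sq hg)
  rw [h1sq_eq_integral hf, h1sq_eq_integral hg, ← integral_add hf_int hg_int]
  exact integral_mono (integrableOn_cell ((continuous_mobArgs hf hg).norm.pow 2))
    (hf_int.add hg_int) (norm_mobArgs_sq_le f g)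

theorem abs_integral_sum_mul_le (hF : Continuous F) (hG : Continuous G) :
    |∫ x in cell d, ∑ i, F x i * G x i| ≤ √(l2sqVec F) * √(l2sqVec G) := by
  have hsq : ∀ (H : (Fin d → ℝ) → Fin d → ℝ) x, √(∑ i, H x i ^ 2) ^ 2 = ∑ i, H x i ^ 2 :=
    fun H x => Real.sq_sqrt (Finset.sum_nonneg fun _ _ => sq_nonneg _)
  calc |∫ x in cell d, ∑ i, F x i * G x i|
      ≤ ∫ x in cell d, |∑ i, F x i * G x i| := abs_integral_le_integral_abs
    _ ≤ ∫ x in cell d, √(∑ i, F x i ^ 2) * √(∑ i, G x i ^ 2) :=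
      integral_mono (integrableOn_cell (by fun_prop)) (integrableOn_cell (by fun_prop))
        fun x => abs_sum_mul_le_sqrt_mul_sqrt _ (F x) (G x)
    _ ≤ √(∫ x in cell d, √(∑ i, F x i ^ 2) ^ 2) * √(∫ x in cell d, √(∑ i, G x i ^ 2) ^ 2) :=
      integral_mul_le_sqrt_mul_sqrt_of_nonneg (ae_of_all _ fun _ => Real.sqrt_nonneg _)
        (ae_of_all _ fun _ => Real.sqrt_nonneg _) (memLp_two_cell (by fun_prop))
        (memLp_two_cell (by fun_prop))
    _ = √(l2sqVec F) * √(l2sqVec G) := by simp only [hsq, l2sqVec]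

theorem le_sSup_cell (hg : Continuous g) (hx : x ∈ cell d) :
    g x ≤ sSup {y | ∃ x ∈ cell d, y = g x} := by
  have hbdd : BddAbove (g '' cell d) := isCompact_Icc.bddAbove_image hg.continuousOn
  refine le_csSup (hbdd.mono ?_) ⟨x, hx, rfl⟩
  rintro _ ⟨y, hy, rfl⟩
  exact Set.mem_image_of_mem g hy

theorem abs_le_supAbs (hg : Continuous g) (hx : x ∈ cell d) : |g x| ≤ supAbs g :=
  le_sSup_cell hg.abs hx

theorem abs_apply_le_supNormVec (hG : Continuous G) (hx : x ∈ cell d) (i : Fin d) :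
    |G x i| ≤ supNormVec G := by
  have hcoord : |G x i| ≤ √(∑ j, G x j ^ 2) := Real.abs_le_sqrt <|
    Finset.single_le_sum (f := fun j => G x j ^ 2) (fun _ _ => sq_nonneg _) (Finset.mem_univ i)
  exact hcoord.trans (le_sSup_cell (g := fun x => √(∑ j, G x j ^ 2)) (by fun_prop) hx)

theorem supAbs_nonneg (g : (Fin d → ℝ) → ℝ) : 0 ≤ supAbs g :=
  Real.sSup_nonneg (by rintro _ ⟨x, -, rfl⟩; exact abs_nonneg _)

theorem supNormVec_nonneg (G : (Fin d → ℝ) → Fin d → ℝ) : 0 ≤ supNormVec G :=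
  Real.sSup_nonneg (by rintro _ ⟨x, -, rfl⟩; exact Real.sqrt_nonneg _)

end CellNorms

section Divergence

variable {d : ℕ} {F : (Fin d → ℝ) → Fin d → ℝ} {v : (Fin d → ℝ) → ℝ} {x : Fin d → ℝ}

theorem continuous_divg (hF : ContDiff ℝ 1 F) : Continuous (divg F) :=
  continuous_finsetSum _ fun i _ =>
    (continuous_apply i).comp (continuous_grad (contDiff_pi.1 hF i))

theorem divg_mul (hF : DifferentiableAt ℝ F x) (hv : DifferentiableAt ℝ v x) :
    divg (fun y i => F y i * v y) x = divg F x * v x + ∑ i, F x i * grad v x i := by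
  simp only [divg, grad, Finset.sum_mul, ← Finset.sum_add_distrib]
  refine Finset.sum_congr rfl fun i _ => ?_
  rw [fderiv_fun_mul (differentiableAt_pi.1 hF i) hv]
  simp only [add_apply, smul_apply, smul_eq_mul]
  ring

theorem integral_divg_eq_zero (hF : ContDiff ℝ 1 F) (hper : ∀ i, ZPeriodic fun x => F x i) :
    ∫ x in cell d, divg F x = 0 := by
  rcases d with _ | n
  · simp [divg]
  have hFi := contDiff_pi.1 hF
  refine (integral_divergence_of_hasFDerivAt_off_countable' 0 1 zero_le_one (fun i x => F x i)
    (fun i x => fderiv ℝ (fun y => F y i) x) ∅ Set.countable_empty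
    (fun i => (hFi i).continuous.continuousOn)
    (fun x _ i => ((hFi i).differentiable one_ne_zero x).hasFDerivAt)
    (integrableOn_cell (continuous_divg hF))).trans (Finset.sum_eq_zero fun i _ => ?_)
  -- Opposite faces differ by the period `eᵢ`, so their boundary terms cancel.
  have hface : ∀ y : Fin n → ℝ, F (i.insertNth 1 y) i = F (i.insertNth 0 y) i := fun y => by
    refine Eq.trans (congrArg (F · i) ?_) (hper i (i.insertNth 0 y) (Pi.single i 1))
    funext j
    refine Fin.succAboveCases i ?_ (fun j => ?_) j <;> simp
  simp [hface]

theorem integral_divg_mul (hF : ContDiff ℝ 1 F) (hFper : ∀ i, ZPeriodic fun x => F x i)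
    (hv : ContDiff ℝ 1 v) (hvper : ZPeriodic v) :
    ∫ x in cell d, divg F x * v x = -∫ x in cell d, ∑ i, F x i * grad v x i := by
  have hFv : ContDiff ℝ 1 fun x i => F x i * v x :=
    contDiff_pi.2 fun i => (contDiff_pi.1 hF i).mul hv
  have hzero := integral_divg_eq_zero hFv fun i x k =>
    congrArg₂ (· * ·) (hFper i x k) (hvper x k)
  have hdivg := continuous_divg hF
  have hgrad := continuous_grad hv
  have hFcont := hF.continuous
  have hvcont := hv.continuous
  simp only [divg_mul (hF.differentiable one_ne_zero _) (hv.differentiable one_ne_zero _)] at hzero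
  rw [integral_add (integrableOn_cell (by fun_prop)) (integrableOn_cell (by fun_prop))] at hzero
  exact eq_neg_of_add_eq_zero_left hzero

theorem hneg1_divg_le (hF : ContDiff ℝ 1 F) (hper : ∀ i, ZPeriodic fun x => F x i) :
    hneg1 (divg F) ≤ √(l2sqVec F) := by
  refine Real.sSup_le ?_ (Real.sqrt_nonneg _)
  rintro _ ⟨v, hv, hvper, -, rfl⟩
  have hv₁ : ContDiff ℝ 1 v := hv.of_le (WithTop.coe_le_coe.2 le_top)
  refine div_le_of_le_mul₀ (Real.sqrt_nonneg _) (Real.sqrt_nonneg _) ?_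
  calc ∫ x in cell d, divg F x * v x
      = -∫ x in cell d, ∑ i, F x i * grad v x i := integral_divg_mul hF hper hv₁ hvper
    _ ≤ |∫ x in cell d, ∑ i, F x i * grad v x i| := neg_le_abs _
    _ ≤ √(l2sqVec F) * √(l2sqVec (grad v)) :=
      abs_integral_sum_mul_le hF.continuous (continuous_grad hv₁)
    _ ≤ √(l2sqVec F) * √(h1sq v) := by gcongr; exact l2sqVec_grad_le_h1sq v

end Divergence

section Residuals

/-- The flux defect `(L − L̂)(∇μ̂_ρ, μ̂_η)`. Its `Sum.inr` entry is the residual `r₃`; exchanging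
the two states turns `L − L̂` into `L̂ − L`, and `r₁` is the divergence of the resulting `Sum.inl`
block. -/
def fluxDefect {d : ℕ} (L : Args d → Matrix (Fin d ⊕ Unit) (Fin d ⊕ Unit) ℝ)
    (ρ η ρh ηh μρh μηh : (Fin d → ℝ) → ℝ) (x : Fin d → ℝ) : Fin d ⊕ Unit → ℝ :=
  (L (mobArgs ρ η x) - L (mobArgs ρh ηh x)).mulVec (Sum.elim (grad μρh x) fun _ => μηh x)

variable {d : ℕ} {L : Args d → Matrix (Fin d ⊕ Unit) (Fin d ⊕ Unit) ℝ}
  {ρ η ρh ηh μρh μηh : (Fin d → ℝ) → ℝ}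

theorem fluxDefect_apply (x : Fin d → ℝ) (k : Fin d ⊕ Unit) :
    fluxDefect L ρ η ρh ηh μρh μηh x k =
      (∑ j, (L (mobArgs ρ η x) k (Sum.inl j) - L (mobArgs ρh ηh x) k (Sum.inl j)) * grad μρh x j)
      + (L (mobArgs ρ η x) k (Sum.inr ()) - L (mobArgs ρh ηh x) k (Sum.inr ())) * μηh x := by
  simp [fluxDefect, Matrix.mulVec, dotProduct]

theorem res1_eq_divg_fluxDefect :
    res1 L ρ η ρh ηh μρh μηh = divg fun x i => fluxDefect L ρh ηh ρ η μρh μηh x (Sum.inl i) := by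
  simp only [fluxDefect_apply]
  rfl

theorem res3_eq_fluxDefect :
    res3 L ρ η ρh ηh μρh μηh = fun x => fluxDefect L ρ η ρh ηh μρh μηh x (Sum.inr ()) := by
  simp only [fluxDefect_apply]
  rfl

theorem contDiff_fluxDefect (hL : ∀ k j, ContDiff ℝ 1 fun p => L p k j)
    (hρ : ContDiff ℝ 2 ρ) (hη : ContDiff ℝ 2 η) (hρh : ContDiff ℝ 2 ρh) (hηh : ContDiff ℝ 2 ηh)
    (hμρh : ContDiff ℝ 2 μρh) (hμηh : ContDiff ℝ 1 μηh) :
    ContDiff ℝ 1 (fluxDefect L ρ η ρh ηh μρh μηh) := by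
  have hone : (1 : WithTop ℕ∞) + 1 ≤ 2 := one_add_one_eq_two.le
  have hdiff : ∀ k j,
      ContDiff ℝ 1 fun x => L (mobArgs ρ η x) k j - L (mobArgs ρh ηh x) k j := fun k j =>
    ((hL k j).comp (contDiff_mobArgs hρ hη hone)).sub
      ((hL k j).comp (contDiff_mobArgs hρh hηh hone))
  refine contDiff_pi.2 fun k => ?_
  simp only [fluxDefect_apply]
  exact (ContDiff.sum fun j _ =>
    (hdiff k _).mul (contDiff_pi.1 (contDiff_grad hμρh hone) j)).add ((hdiff k _).mul hμηh)

theorem zPeriodic_fluxDefect (hρ : ZPeriodic ρ) (hη : ZPeriodic η) (hρh : ZPeriodic ρh)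
    (hηh : ZPeriodic ηh) (hμρh : ZPeriodic μρh) (hμηh : ZPeriodic μηh) (k : Fin d ⊕ Unit) :
    ZPeriodic fun x => fluxDefect L ρ η ρh ηh μρh μηh x k := fun x z => by
  simp only [fluxDefect, hρ.mobArgs_add_intCast hη, hρh.mobArgs_add_intCast hηh,
    hμρh.grad_add_intCast, hμηh x z]

variable {Λ : NNReal}

theorem abs_fluxDefect_le (hL : ∀ k j, LipschitzWith Λ fun p => L p k j)
    (hμρh : ContDiff ℝ 1 μρh) (hμηh : Continuous μηh) {x : Fin d → ℝ} (hx : x ∈ cell d)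
    (k : Fin d ⊕ Unit) :
    |fluxDefect L ρ η ρh ηh μρh μηh x k| ≤
      (d + 1) * Λ * (supNormVec (grad μρh) + supAbs μηh) *
        ‖mobArgs ρ η x - mobArgs ρh ηh x‖ := by
  have hmobility : ∀ j, |(L (mobArgs ρ η x) - L (mobArgs ρh ηh x)) k j| ≤
      Λ * ‖mobArgs ρ η x - mobArgs ρh ηh x‖ := fun j => (hL k j).norm_sub_le _ _
  have hforce : ∀ j, |Sum.elim (grad μρh x) (fun _ : Unit => μηh x) j| ≤
      supNormVec (grad μρh) + supAbs μηh := by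
    rintro (i | _)
    · exact le_add_of_le_of_nonneg (abs_apply_le_supNormVec (continuous_grad hμρh) hx i)
        (supAbs_nonneg _)
    · exact le_add_of_nonneg_of_le (supNormVec_nonneg _) (abs_le_supAbs hμηh hx)
  refine (abs_dotProduct_le_card_mul hmobility hforce).trans_eq ?_
  simp only [Fintype.card_sum, Fintype.card_fin, Fintype.card_unit, Nat.cast_add, Nat.cast_one]
  ring

theorem sqrt_l2sq_const_mul_norm_mobArgs_sub_le (hρ : ContDiff ℝ 1 ρ) (hη : ContDiff ℝ 1 η)
    (hρh : ContDiff ℝ 1 ρh) (hηh : ContDiff ℝ 1 ηh) {c : ℝ} (hc : 0 ≤ c) :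
    √(l2sq fun x => c * ‖mobArgs ρ η x - mobArgs ρh ηh x‖) ≤
      c * (√(h1sq fun x => ρ x - ρh x) + √(h1sq fun x => η x - ηh x)) := by
  simp only [l2sq_const_mul, Real.sqrt_mul (sq_nonneg c), Real.sqrt_sq hc]
  gcongr
  simp only [← mobArgs_sub (hρ.differentiable one_ne_zero _) (hη.differentiable one_ne_zero _)
    (hρh.differentiable one_ne_zero _) (hηh.differentiable one_ne_zero _)]
  exact (Real.sqrt_le_sqrt (l2sq_norm_mobArgs_le (hρ.sub hρh) (hη.sub hηh))).trans
    (sqrt_add_le_sqrt_add_sqrt (h1sq_nonneg _) (h1sq_nonneg _))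

theorem sqrt_l2sq_res3_le (hL : ∀ k j, LipschitzWith Λ fun p => L p k j)
    (hρ : ContDiff ℝ 1 ρ) (hη : ContDiff ℝ 1 η) (hρh : ContDiff ℝ 1 ρh) (hηh : ContDiff ℝ 1 ηh)
    (hμρh : ContDiff ℝ 1 μρh) (hμηh : Continuous μηh) :
    √(l2sq (res3 L ρ η ρh ηh μρh μηh)) ≤
      (d + 1) * Λ * (supNormVec (grad μρh) + supAbs μηh) *
        (√(h1sq fun x => ρ x - ρh x) + √(h1sq fun x => η x - ηh x)) := by
  have hc : 0 ≤ (d + 1) * Λ * (supNormVec (grad μρh) + supAbs μηh) :=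
    mul_nonneg (by positivity) (add_nonneg (supNormVec_nonneg _) (supAbs_nonneg _))
  have hargs := ((continuous_mobArgs hρ hη).sub (continuous_mobArgs hρh hηh)).norm
  rw [res3_eq_fluxDefect]
  exact (Real.sqrt_le_sqrt (l2sq_le_of_abs_le (continuous_const.mul hargs) fun x hx =>
    abs_fluxDefect_le hL hμρh hμηh hx _)).trans
    (sqrt_l2sq_const_mul_norm_mobArgs_sub_le hρ hη hρh hηh hc)

theorem hneg1_res1_le (hL : ∀ k j, ContDiff ℝ 1 fun p => L p k j)
    (hLip : ∀ k j, LipschitzWith Λ fun p => L p k j)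
    (hρ : ContDiff ℝ 2 ρ) (hη : ContDiff ℝ 2 η) (hρh : ContDiff ℝ 2 ρh) (hηh : ContDiff ℝ 2 ηh)
    (hμρh : ContDiff ℝ 2 μρh) (hμηh : ContDiff ℝ 1 μηh)
    (pρ : ZPeriodic ρ) (pη : ZPeriodic η) (pρh : ZPeriodic ρh) (pηh : ZPeriodic ηh)
    (pμρh : ZPeriodic μρh) (pμηh : ZPeriodic μηh) :
    hneg1 (res1 L ρ η ρh ηh μρh μηh) ≤
      √d * ((d + 1) * Λ * (supNormVec (grad μρh) + supAbs μηh) *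
        (√(h1sq fun x => ρ x - ρh x) + √(h1sq fun x => η x - ηh x))) := by
  set c := (d + 1) * Λ * (supNormVec (grad μρh) + supAbs μηh)
  have hc : 0 ≤ c :=
    mul_nonneg (by positivity) (add_nonneg (supNormVec_nonneg _) (supAbs_nonneg _))
  have hargs : Continuous fun x => ‖mobArgs ρ η x - mobArgs ρh ηh x‖ :=
    ((continuous_mobArgs (hρ.of_le one_le_two) (hη.of_le one_le_two)).sub
      (continuous_mobArgs (hρh.of_le one_le_two) (hηh.of_le one_le_two))).norm
  have hflux := contDiff_pi.1 (contDiff_fluxDefect hL hρh hηh hρ hη hμρh hμηh)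
  rw [res1_eq_divg_fluxDefect]
  calc hneg1 (divg fun x i => fluxDefect L ρh ηh ρ η μρh μηh x (Sum.inl i))
      ≤ √(l2sqVec fun x i => fluxDefect L ρh ηh ρ η μρh μηh x (Sum.inl i)) :=
        hneg1_divg_le (contDiff_pi.2 fun i => hflux (Sum.inl i)) fun i =>
          zPeriodic_fluxDefect pρh pηh pρ pη pμρh pμηh (Sum.inl i)
    _ ≤ √(d * l2sq fun x => c * ‖mobArgs ρ η x - mobArgs ρh ηh x‖) :=
        Real.sqrt_le_sqrt <| l2sqVec_le_of_abs_le (continuous_const.mul hargs) fun x hx i => by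
          rw [norm_sub_rev]
          exact abs_fluxDefect_le hLip (hμρh.of_le one_le_two) hμηh.continuous hx _
    _ = √d * √(l2sq fun x => c * ‖mobArgs ρ η x - mobArgs ρh ηh x‖) :=
        Real.sqrt_mul d.cast_nonneg _
    _ ≤ _ := by
        gcongr
        exact sqrt_l2sq_const_mul_norm_mobArgs_sub_le (hρ.of_le one_le_two) (hη.of_le one_le_two)
          (hρh.of_le one_le_two) (hηh.of_le one_le_two) hc

theorem stmt19_general {CL : ℝ} (hL : ∀ i j, ContDiff ℝ 1 fun q => L q i j)
    (hCL : ∀ q i j, ‖fderiv ℝ (fun p => L p i j) q‖ ≤ CL)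
    (hρ : ContDiff ℝ 2 ρ) (hη : ContDiff ℝ 2 η) (hρh : ContDiff ℝ 2 ρh) (hηh : ContDiff ℝ 2 ηh)
    (hμρh : ContDiff ℝ 2 μρh) (hμηh : ContDiff ℝ 1 μηh)
    (pρ : ZPeriodic ρ) (pη : ZPeriodic η) (pρh : ZPeriodic ρh) (pηh : ZPeriodic ηh)
    (pμρh : ZPeriodic μρh) (pμηh : ZPeriodic μηh) :
    hneg1 (res1 L ρ η ρh ηh μρh μηh) + √(l2sq (res3 L ρ η ρh ηh μρh μηh)) ≤
      (√d + 1) * (d + 1) * CL * (supNormVec (grad μρh) + supAbs μηh) *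
        (√(h1sq fun x => ρ x - ρh x) + √(h1sq fun x => η x - ηh x)) := by
  lift CL to NNReal using (norm_nonneg _).trans (hCL 0 (Sum.inr ()) (Sum.inr ()))
  have hLip : ∀ i j, LipschitzWith CL fun q => L q i j := fun i j =>
    lipschitzWith_of_nnnorm_fderiv_le ((hL i j).differentiable one_ne_zero) fun q => hCL q i j
  have hr₁ := hneg1_res1_le hL hLip hρ hη hρh hηh hμρh hμηh pρ pη pρh pηh pμρh pμηh
  have hr₃ := sqrt_l2sq_res3_le hLip (hρ.of_le one_le_two) (hη.of_le one_le_two)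
    (hρh.of_le one_le_two) (hηh.of_le one_le_two) (hμρh.of_le one_le_two) hμηh.continuous
  exact (add_le_add hr₁ hr₃).trans_eq (by ring)

end Residuals

/-- residual bounds (6.2)–(6.3): for a smooth mobility with
first partial derivatives bounded by `C_L`, there is `C > 0` depending only on
`C_L` and `d` with
`‖r₁‖₋₁ + ‖r₃‖₀ ≤ C (‖∇μ̂_ρ‖_{L^∞} + ‖μ̂_η‖_{L^∞}) (‖ρ−ρ̂‖₁ + ‖η−η̂‖₁)`. -/
theorem stmt19 (d : ℕ) (hd : 1 ≤ d) (CL : ℝ) (hCL : 0 < CL) :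
    ∃ C : ℝ, 0 < C ∧
      ∀ L : Args d → Matrix (Fin d ⊕ Unit) (Fin d ⊕ Unit) ℝ,
        (∀ i j, ContDiff ℝ (⊤ : ℕ∞) fun q : Args d => L q i j) →
        (∀ (q : Args d) i j, ‖fderiv ℝ (fun p => L p i j) q‖ ≤ CL) →
        ∀ ρ η ρh ηh μρh μηh : (Fin d → ℝ) → ℝ,
          ContDiff ℝ (⊤ : ℕ∞) ρ → ContDiff ℝ (⊤ : ℕ∞) η →
          ContDiff ℝ (⊤ : ℕ∞) ρh → ContDiff ℝ (⊤ : ℕ∞) ηh →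
          ContDiff ℝ (⊤ : ℕ∞) μρh → ContDiff ℝ (⊤ : ℕ∞) μηh →
          ZPeriodic ρ → ZPeriodic η →
          ZPeriodic ρh → ZPeriodic ηh →
          ZPeriodic μρh → ZPeriodic μηh →
          hneg1 (res1 L ρ η ρh ηh μρh μηh)
              + Real.sqrt (l2sq (res3 L ρ η ρh ηh μρh μηh))
            ≤ C * (supNormVec (grad μρh) + supAbs μηh)
              * (Real.sqrt (h1sq fun x => ρ x - ρh x)
                + Real.sqrt (h1sq fun x => η x - ηh x)) := by
  refine ⟨(√d + 1) * (d + 1) * CL, by positivity, ?_⟩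
  intro L hL hCL' ρ η ρh ηh μρh μηh hρ hη hρh hηh hμρh hμηh
  have one_le : (1 : WithTop ℕ∞) ≤ (⊤ : ℕ∞) := WithTop.coe_le_coe.2 le_top
  have two_le : (2 : WithTop ℕ∞) ≤ (⊤ : ℕ∞) := WithTop.coe_le_coe.2 le_top
  exact stmt19_general (fun i j => (hL i j).of_le one_le) hCL' (hρ.of_le two_le) (hη.of_le two_le)
    (hρh.of_le two_le) (hηh.of_le two_le) (hμρh.of_le two_le) (hμηh.of_le one_le)
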